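/- Let ω and φ be as in the context. Then φ is nonincreasing on [0,1], and there exists a constant δ₁ > 0 (depending only on n and the constants bounding μ) such that φ(x) ≥ φ(0)/2 for all x ∈ [0, δ₁] and φ(x) ≤ φ(1)/2 for all x ∈ [1−δ₁, 1]. In particular, the unique zero s₁ of φ satisfies δ₁ < s₁ < 1 − δ₁. -/

import Mathlib

open MeasureTheory Set Filter Topology RealInnerProductSpace

noncomputable section

/-- The point `(x, y) ∈ ℝ × ℝ^m ≅ ℝ^{m+1}`. -/
def mkPt (m : ℕ) (x : ℝ) (y : EuclideanSpace ℝ (Fin m)) : EuclideanSpace ℝ (Fin (m+1)) :=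
  (EuclideanSpace.equiv (Fin (m+1)) ℝ).symm (Fin.cons x ((EuclideanSpace.equiv (Fin m) ℝ) y))

/-- The cross-section `Ω(s) = {y : (s, y) ∈ Ω}`. -/
def cross {m : ℕ} (Ω : Set (EuclideanSpace ℝ (Fin (m+1)))) (s : ℝ) :
    Set (EuclideanSpace ℝ (Fin m)) := {y | mkPt m s y ∈ Ω}

/-- `ω(s)`: the (n-1)-dimensional volume of the cross-section `Ω(s)`. -/
def ωvol {m : ℕ} (Ω : Set (EuclideanSpace ℝ (Fin (m+1)))) (s : ℝ) : ℝ :=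
  (volume (cross Ω s)).toReal

/-- The Laplacian, as the sum of the pure second derivatives along the standard basis. -/
def lap {k : ℕ} (u : EuclideanSpace ℝ (Fin k) → ℝ) (p : EuclideanSpace ℝ (Fin k)) : ℝ :=
  ∑ i, fderiv ℝ (fun q => fderiv ℝ u q (EuclideanSpace.single i 1)) p (EuclideanSpace.single i 1)

/-- The cross-sectional average `ū(x)` of `u`. -/
def ubarFn {m : ℕ} (Ω : Set (EuclideanSpace ℝ (Fin (m+1))))
    (u : EuclideanSpace ℝ (Fin (m+1)) → ℝ) (x : ℝ) : ℝ :=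
  (∫ y in cross Ω x, u (mkPt m x y)) / ωvol Ω x

/-- `(φ, φd)` is a (nonzero, C¹ on [0,1]) solution of the Neumann problem
`-(ω φ')' = μ ω φ` on (0,1), with `φ'(0) = φ'(1) = 0`. -/
def NeumannSol (ω : ℝ → ℝ) (μ : ℝ) (φ φd : ℝ → ℝ) : Prop :=
  (∀ x ∈ Icc (0:ℝ) 1, HasDerivWithinAt φ (φd x) (Icc 0 1) x) ∧
  ContinuousOn φd (Icc 0 1) ∧ φd 0 = 0 ∧ φd 1 = 0 ∧
  (∃ x ∈ Icc (0:ℝ) 1, φ x ≠ 0) ∧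
  ∀ x ∈ Ioo (0:ℝ) 1, HasDerivAt (fun t => ω t * φd t) (-(μ * ω x * φ x)) x

/-- `μ` is a Neumann eigenvalue of `-(ω φ')' = μ ω φ`. -/
def IsNeumannEigenvalue (ω : ℝ → ℝ) (μ : ℝ) : Prop := ∃ φ φd, NeumannSol ω μ φ φd

/-!
The sections of a convex body contain scaled copies of one another, so `ω` is, up to the factor
`3 ^ m`, increasing on `(0, 1/2]` and decreasing on `[1/2, 1)`. Hence `(∫₀ˣ ω f) / ω x` is bounded
however `ω` degenerates at the endpoints, and the solution operator of `-(ω u')' = ω f` is compact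
on `C([0, 1])`.

Integrating the equation gives `ω φ' = -μ ∫₀ˣ ω φ`. If `φ'` vanished at an interior point, then
`φ` would have mean zero up to that point, hence a negative minimum at an interior critical point
`t`. Freezing `φ` beyond `t` yields a test function with Rayleigh quotient below `μ`, whereas
compactness provides a positive eigenvalue below every Rayleigh quotient, contradicting the
minimality of `μ`. So `φ' < 0` on `(0, 1)`.

For `x ≤ 1/2` the integrated equation and the quasi-monotonicity of `ω` bound `-φ'(x)` by
`3 ^ m μ φ(0)`, so `φ` needs a fixed amount of room to drop to `φ(0) / 2`. The other end follows by
reflection.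
-/

/-! ### Characteristic values of compact symmetric operators -/

section Rayleigh

variable {E : Type*} [NormedAddCommGroup E] [NormedSpace ℝ E]

/-- A real number `l` is a characteristic value of `S` if `u = l • S u` has a nonzero solution,
i.e. if `l⁻¹` is a nonzero eigenvalue of `S`. -/
def IsCharacteristicValue (S : E →L[ℝ] E) (l : ℝ) : Prop := ∃ u ≠ 0, u = l • S u

theorem isUnit_one_sub_smul [CompleteSpace E] {S : E →L[ℝ] E} (hS : IsCompactOperator S) {l : ℝ}
    (hl : ¬ IsCharacteristicValue S l) : IsUnit (1 - l • S) := by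
  rcases eq_or_ne l 0 with rfl | hl0
  · simp
  rcases hS.hasEigenvalue_or_mem_resolventSet (inv_ne_zero hl0) with h | h
  · obtain ⟨u, hu⟩ := h.exists_hasEigenvector
    refine absurd ⟨u, hu.2, ?_⟩ hl
    have : S u = l⁻¹ • u := hu.apply_eq_smul
    rw [this, smul_inv_smul₀ hl0]
  · have : 1 - l • S = (Units.mk0 l hl0) • (algebraMap ℝ (E →L[ℝ] E) l⁻¹ - S) := by
      rw [Algebra.algebraMap_eq_smul_one, smul_sub, Units.smul_mk0, Units.smul_mk0,
        smul_inv_smul₀ hl0]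
    rw [this]
    exact h.smul _

theorem inverse_apply_sub_smul {S : E →L[ℝ] E} {l : ℝ} (h : IsUnit (1 - l • S)) (f : E) :
    Ring.inverse (1 - l • S) f - l • S (Ring.inverse (1 - l • S) f) = f := by
  simpa using congr($(Ring.mul_inverse_cancel _ h) f)

theorem hasDerivAt_inverse_one_sub_smul_apply [CompleteSpace E] {S : E →L[ℝ] E} {l : ℝ}
    (h : IsUnit (1 - l • S)) (f : E) :
    HasDerivAt (fun l : ℝ => Ring.inverse (1 - l • S) f)
      (Ring.inverse (1 - l • S) (S (Ring.inverse (1 - l • S) f))) l := by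
  have hline : HasDerivAt (fun l : ℝ => 1 - l • S) (-S) l := by
    simpa using ((hasDerivAt_id l).smul_const S).const_sub 1
  obtain ⟨R, hR⟩ := h
  have hinv : HasFDerivAt Ring.inverse
      (-ContinuousLinearMap.mulLeftRight ℝ (E →L[ℝ] E) ↑R⁻¹ ↑R⁻¹) (1 - l • S) :=
    hR ▸ hasFDerivAt_ringInverse R
  have hcomp := hinv.comp_hasDerivAt l hline
  have happly := hcomp.clm_apply (hasDerivAt_const l f)
  rw [← hR, Ring.inverse_unit]
  simpa [Function.comp_def] using happly

theorem lt_div_of_sq_le_mul_deriv {p p' : ℝ → ℝ} {a β : ℝ} (ha : 0 ≤ a) (hβ : 0 < β)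
    (hp0 : 0 < p 0) (hp : ∀ l ∈ Icc 0 a, HasDerivAt p (p' l) l)
    (hle : ∀ l ∈ Icc 0 a, p l ^ 2 ≤ p' l * β) : a < β / p 0 := by
  have hpc : ContinuousOn p (Icc 0 a) := fun l hl => (hp l hl).continuousAt.continuousWithinAt
  have hp'nonneg : ∀ l ∈ Icc 0 a, 0 ≤ p' l := fun l hl =>
    nonneg_of_mul_nonneg_left ((sq_nonneg _).trans (hle l hl)) hβ
  have hmono : MonotoneOn p (Icc 0 a) := monotoneOn_of_hasDerivWithinAt_nonneg (convex_Icc 0 a) hpc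
    (fun l hl => (hp l (interior_subset hl)).hasDerivWithinAt)
    (fun l hl => hp'nonneg l (interior_subset hl))
  have hpos : ∀ l ∈ Icc 0 a, 0 < p l := fun l hl =>
    hp0.trans_le (hmono (left_mem_Icc.2 ha) hl hl.1)
  have hderiv : ∀ l ∈ Icc 0 a,
      HasDerivAt (fun l => β * (p l)⁻¹ + l) (β * (-p' l / p l ^ 2) + 1) l := fun l hl =>
    (((hp l hl).inv (hpos l hl).ne').const_mul β).add (hasDerivAt_id l)
  have hanti : AntitoneOn (fun l => β * (p l)⁻¹ + l) (Icc 0 a) := by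
    refine antitoneOn_of_hasDerivWithinAt_nonpos (convex_Icc 0 a)
      (fun l hl => (hderiv l hl).continuousAt.continuousWithinAt)
      (fun l hl => (hderiv l (interior_subset hl)).hasDerivWithinAt) fun l hl => ?_
    have hl := interior_subset hl
    have : 1 ≤ p' l * β / p l ^ 2 := (one_le_div (pow_pos (hpos l hl) 2)).2 (hle l hl)
    linear_combination this
  have hend := hanti (left_mem_Icc.2 ha) (right_mem_Icc.2 ha) ha
  have : 0 < β * (p a)⁻¹ := mul_pos hβ (inv_pos.2 (hpos a (right_mem_Icc.2 ha)))
  rw [div_eq_mul_inv]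
  linarith

variable {B : E →L[ℝ] E →L[ℝ] ℝ} {S : E →L[ℝ] E}

theorem sq_apply_apply_le_of_forall_nonneg (hsymm : ∀ x y, B x y = B y x)
    (hnonneg : ∀ x, 0 ≤ B x x) (x y : E) : B x y ^ 2 ≤ B x x * B y y := by
  have := LinearMap.BilinForm.apply_mul_apply_le_of_forall_zero_le
    (B.toLinearMap₁₂) hnonneg x y
  simpa [sq, hsymm y x] using this

theorem apply_apply_eq_of_sub_smul_eq
    (hS : ∀ x y, B (S x) y = B x (S y)) {l : ℝ} {f u w : E} (hu : u - l • S u = f)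
    (hw : w - l • S w = S u) : B (S w) f = B (S u) (S u) := by
  have := congr(B $hw (S u))
  rw [← hu]
  simp only [map_sub, map_smul, sub_apply, smul_apply] at this ⊢
  rw [← this, hS w u]

/-- The function `l ↦ B (S u_l) f`, where `u_l - l • S u_l = f`, satisfies `p' ≥ p ^ 2 / B f f` by
Cauchy–Schwarz, so it blows up before `B f f / p 0`; but it is finite unless some `l` on the way
is a characteristic value. -/
theorem exists_isCharacteristicValue_le_rayleigh [CompleteSpace E] (hcomp : IsCompactOperator S)
    (hsymm : ∀ x y, B x y = B y x) (hnonneg : ∀ x, 0 ≤ B x x)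
    (hS : ∀ x y, B (S x) y = B x (S y)) {f : E} (hf : 0 < B (S f) f) :
    ∃ l, 0 < l ∧ l ≤ B f f / B (S f) f ∧ IsCharacteristicValue S l := by
  have hff : 0 < B f f := by
    have hsq := sq_apply_apply_le_of_forall_nonneg hsymm hnonneg (S f) f
    exact pos_of_mul_pos_right ((pow_pos hf 2).trans_le hsq) (hnonneg _)
  by_contra! hno
  set a := B f f / B (S f) f with ha
  have hunit : ∀ l ∈ Icc 0 a, IsUnit (1 - l • S) := by
    intro l hl
    rcases hl.1.eq_or_lt with rfl | hl0
    · simp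
    · exact isUnit_one_sub_smul hcomp (hno l hl0 hl.2)
  set u : ℝ → E := fun l => Ring.inverse (1 - l • S) f
  set w : ℝ → E := fun l => Ring.inverse (1 - l • S) (S (u l))
  have hu0 : u 0 = f := by simp [u]
  refine absurd (lt_div_of_sq_le_mul_deriv (p := fun l => B (S (u l)) f)
    (p' := fun l => B (S (w l)) f) (a := a) (by positivity) hff (by simpa [hu0] using hf) ?_ ?_)
    (by simp [hu0, ha])
  · intro l hl
    exact ((B.flip f).comp S).hasFDerivAt.comp_hasDerivAt l
      (hasDerivAt_inverse_one_sub_smul_apply (hunit l hl) f)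
  · intro l hl
    have hw : B (S (w l)) f = B (S (u l)) (S (u l)) :=
      apply_apply_eq_of_sub_smul_eq hS (inverse_apply_sub_smul (hunit l hl) f)
        (inverse_apply_sub_smul (hunit l hl) (S (u l)))
    rw [hw]
    exact sq_apply_apply_le_of_forall_nonneg hsymm hnonneg _ _

end Rayleigh

/-! ### Quasi-unimodal weights -/

/-- A weight which is positive and continuous on `(0, 1)` and, up to the factor `D`, increasing on
`(0, 1/2]` and decreasing on `[1/2, 1)`. Nothing is required of its values outside `(0, 1)`. -/
structure QuasiUnimodal (D : ℝ) (ω : ℝ → ℝ) : Prop where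
  pos : ∀ ⦃x⦄, x ∈ Ioo (0 : ℝ) 1 → 0 < ω x
  continuousOn : ContinuousOn ω (Ioo 0 1)
  le_of_le_half : ∀ ⦃r s⦄, 0 < r → r ≤ s → s ≤ 1 / 2 → ω r ≤ D * ω s
  le_of_half_le : ∀ ⦃r s⦄, 1 / 2 ≤ s → s ≤ r → r < 1 → ω r ≤ D * ω s

/-- The flux `∫₀ˣ ω f`: up to sign, `ω φ'` for a function `φ` with `-(ω φ')' = ω f` and
`φ'(0) = 0`. -/
def flux (ω f : ℝ → ℝ) (x : ℝ) : ℝ := ∫ r in (0 : ℝ)..x, ω r * f r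

theorem flux_congr {ω f g : ℝ → ℝ} (hfg : EqOn f g (Icc 0 1)) {x : ℝ} (hx : x ∈ Icc (0 : ℝ) 1) :
    flux ω f x = flux ω g x :=
  intervalIntegral.integral_congr_Ioo_of_le hx.1 fun r hr =>
    congrArg (ω r * ·) (hfg ⟨hr.1.le, hr.2.le.trans hx.2⟩)

theorem flux_const_mul (ω : ℝ → ℝ) (c : ℝ) (f : ℝ → ℝ) (x : ℝ) :
    flux ω (fun r => c * f r) x = c * flux ω f x := by
  simp only [flux, mul_left_comm _ c, intervalIntegral.integral_const_mul]

namespace QuasiUnimodal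

variable {D : ℝ} {ω : ℝ → ℝ} {f g : ℝ → ℝ} {x M : ℝ}

theorem comp_one_sub (h : QuasiUnimodal D ω) : QuasiUnimodal D fun x => ω (1 - x) where
  pos x hx := h.pos ⟨by linarith [hx.2], by linarith [hx.1]⟩
  continuousOn := h.continuousOn.comp (by fun_prop)
    fun x hx => ⟨by linarith [hx.2], by linarith [hx.1]⟩
  le_of_le_half _ _ h0 hrs hs := h.le_of_half_le (by linarith) (by linarith) (by linarith)
  le_of_half_le _ _ hs hrs h1 := h.le_of_le_half (by linarith) (by linarith) (by linarith)

theorem one_le (h : QuasiUnimodal D ω) : 1 ≤ D := by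
  have hhalf : 0 < ω (1 / 2) := h.pos (by norm_num)
  exact (le_mul_iff_one_le_left hhalf).1
    (h.le_of_le_half (by norm_num : (0 : ℝ) < 1 / 2) le_rfl le_rfl)

theorem nonneg (h : QuasiUnimodal D ω) : 0 ≤ D := zero_le_one.trans h.one_le

theorem le_mul_apply_half (h : QuasiUnimodal D ω) (hx : x ∈ Ioo (0 : ℝ) 1) : ω x ≤ D * ω (1 / 2) :=
  (le_total x (1 / 2)).elim (fun hx' => h.le_of_le_half hx.1 hx' le_rfl)
    fun hx' => h.le_of_half_le le_rfl hx' hx.2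

theorem intervalIntegrable_zero_one (h : QuasiUnimodal D ω) : IntervalIntegrable ω volume 0 1 := by
  rw [intervalIntegrable_iff_integrableOn_Ioo_of_le zero_le_one]
  refine IntegrableOn.of_bound (by simp) (h.continuousOn.aestronglyMeasurable measurableSet_Ioo)
    (D * ω (1 / 2)) ?_
  filter_upwards [ae_restrict_mem measurableSet_Ioo] with x hx
  rw [Real.norm_of_nonneg (h.pos hx).le]
  exact h.le_mul_apply_half hx

theorem intervalIntegrable_mul (h : QuasiUnimodal D ω) (hf : ContinuousOn f (Icc 0 1)) {a b : ℝ}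
    (ha : a ∈ Icc (0 : ℝ) 1) (hb : b ∈ Icc (0 : ℝ) 1) :
    IntervalIntegrable (fun x => ω x * f x) volume a b := by
  rw [← uIcc_of_le zero_le_one] at hf ha hb
  exact (h.intervalIntegrable_zero_one.mul_continuousOn hf).mono_set (uIcc_subset_uIcc ha hb)

theorem continuousOn_flux (h : QuasiUnimodal D ω) (hf : ContinuousOn f (Icc 0 1)) :
    ContinuousOn (flux ω f) (Icc 0 1) := by
  have := intervalIntegral.continuousOn_primitive_interval' (h.intervalIntegrable_mul hf
    (left_mem_Icc.2 zero_le_one) (right_mem_Icc.2 zero_le_one)) left_mem_uIcc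
  rwa [uIcc_of_le zero_le_one] at this

theorem hasDerivAt_flux (h : QuasiUnimodal D ω) (hf : ContinuousOn f (Icc 0 1))
    (hx : x ∈ Ioo (0 : ℝ) 1) : HasDerivAt (flux ω f) (ω x * f x) x := by
  have hcont : ContinuousOn (fun x => ω x * f x) (Ioo 0 1) :=
    h.continuousOn.mul (hf.mono Ioo_subset_Icc_self)
  exact intervalIntegral.integral_hasDerivAt_right
    (h.intervalIntegrable_mul hf (left_mem_Icc.2 zero_le_one) (Ioo_subset_Icc_self hx))
    (hcont.stronglyMeasurableAtFilter isOpen_Ioo x hx) (hcont.continuousAt (Ioo_mem_nhds hx.1 hx.2))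

theorem flux_le_of_le (h : QuasiUnimodal D ω) (hf : ContinuousOn f (Icc 0 1)) (hx0 : 0 < x)
    (hx : x ≤ 1 / 2) (hM : 0 ≤ M) (hfM : ∀ r ∈ Icc 0 x, f r ≤ M) :
    flux ω f x ≤ D * M * x * ω x := by
  have hle : ∀ r ∈ Ioo 0 x, ω r * f r ≤ D * ω x * M := fun r hr =>
    calc ω r * f r ≤ ω r * M :=
          mul_le_mul_of_nonneg_left (hfM r (Ioo_subset_Icc_self hr))
            (h.pos ⟨hr.1, by linarith [hr.2]⟩).le
      _ ≤ D * ω x * M := mul_le_mul_of_nonneg_right (h.le_of_le_half hr.1 hr.2.le hx) hM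
  calc flux ω f x ≤ ∫ _ in (0 : ℝ)..x, D * ω x * M :=
        intervalIntegral.integral_mono_on_of_le_Ioo hx0.le
          (h.intervalIntegrable_mul hf (by norm_num) ⟨hx0.le, by linarith⟩) (by simp) hle
    _ = D * M * x * ω x := by
        rw [intervalIntegral.integral_const, smul_eq_mul]
        ring

theorem abs_flux_le_of_le_half (h : QuasiUnimodal D ω) (hf : ContinuousOn f (Icc 0 1)) (hx0 : 0 < x)
    (hx : x ≤ 1 / 2) (hfM : ∀ r ∈ Icc (0 : ℝ) 1, |f r| ≤ M) :
    |flux ω f x| ≤ D * M * x * ω x := by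
  have hM : 0 ≤ M := (abs_nonneg _).trans (hfM 0 (by norm_num))
  have hIcc : Icc 0 x ⊆ Icc 0 1 := Icc_subset_Icc_right (by linarith)
  refine abs_le'.2 ⟨h.flux_le_of_le hf hx0 hx hM fun r hr => (abs_le'.1 (hfM r (hIcc hr))).1, ?_⟩
  have := h.flux_le_of_le hf.neg hx0 hx hM fun r hr => (abs_le'.1 (hfM r (hIcc hr))).2
  simpa [flux] using this

theorem flux_comp_one_sub (h : QuasiUnimodal D ω) (hf : ContinuousOn f (Icc 0 1))
    (hzero : flux ω f 1 = 0) (hx : x ∈ Icc (0 : ℝ) 1) :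
    flux (fun r => ω (1 - r)) (fun r => f (1 - r)) x = -flux ω f (1 - x) := by
  have hx' : 1 - x ∈ Icc (0 : ℝ) 1 := ⟨by linarith [hx.2], by linarith [hx.1]⟩
  have hsplit := intervalIntegral.integral_add_adjacent_intervals
    (h.intervalIntegrable_mul hf (left_mem_Icc.2 zero_le_one) hx')
    (h.intervalIntegrable_mul hf hx' (right_mem_Icc.2 zero_le_one))
  simp only [flux] at *
  rw [intervalIntegral.integral_comp_sub_left (fun r => ω r * f r), sub_zero]
  linarith

/-- Since the total flux vanishes, it can be computed from either endpoint; between `x` and the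
nearer one, `ω` is at most `D * ω x`, however fast it degenerates there. -/
theorem abs_flux_div_le (h : QuasiUnimodal D ω) (hf : ContinuousOn f (Icc 0 1))
    (hzero : flux ω f 1 = 0) (hfM : ∀ r ∈ Icc (0 : ℝ) 1, |f r| ≤ M) (hx : x ∈ Icc (0 : ℝ) 1) :
    |flux ω f x / ω x| ≤ D * M * min x (1 - x) := by
  rcases hx.1.eq_or_lt with rfl | hx0
  · simp [flux]
  rcases hx.2.eq_or_lt with rfl | hx1
  · simp [hzero]
  have hω := h.pos ⟨hx0, hx1⟩
  rw [abs_div, abs_of_pos hω, div_le_iff₀ hω]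
  rcases le_total x (1 / 2) with hhalf | hhalf
  · rw [min_eq_left (by linarith)]
    exact h.abs_flux_le_of_le_half hf hx0 hhalf hfM
  · have hsub : MapsTo (fun r : ℝ => 1 - r) (Icc 0 1) (Icc 0 1) :=
      fun r hr => ⟨by linarith [hr.2], by linarith [hr.1]⟩
    have := h.comp_one_sub.abs_flux_le_of_le_half (f := fun r => f (1 - r)) (x := 1 - x)
      (hf.comp (by fun_prop) hsub) (by linarith) (by linarith) fun r hr => hfM _ (hsub hr)
    rwa [h.flux_comp_one_sub hf hzero ⟨by linarith, by linarith⟩, sub_sub_cancel, abs_neg,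
      ← min_eq_right (by linarith : 1 - x ≤ x)] at this

theorem continuousOn_flux_div (h : QuasiUnimodal D ω) (hf : ContinuousOn f (Icc 0 1))
    (hzero : flux ω f 1 = 0) : ContinuousOn (fun x => flux ω f x / ω x) (Icc 0 1) := by
  obtain ⟨M, hM⟩ := isCompact_Icc.exists_bound_of_continuousOn hf
  have hendpoint : ∀ x, min x (1 - x) = 0 → flux ω f x / ω x = 0 →
      ContinuousWithinAt (fun x => flux ω f x / ω x) (Icc 0 1) x := by
    intro x hx hx0
    have hbound : Tendsto (fun y => D * M * min y (1 - y)) (𝓝[Icc 0 1] x) (𝓝 0) := by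
      have : Continuous fun y : ℝ => D * M * min y (1 - y) := by fun_prop
      simpa [hx] using (this.tendsto x).mono_left nhdsWithin_le_nhds
    rw [ContinuousWithinAt, hx0]
    exact squeeze_zero_norm' (eventually_mem_nhdsWithin.mono fun y hy =>
      h.abs_flux_div_le hf hzero hM hy) hbound
  intro x hx
  rcases hx.1.eq_or_lt with rfl | hx0
  · exact hendpoint 0 (by simp) (by simp [flux])
  rcases hx.2.eq_or_lt with rfl | hx1
  · exact hendpoint 1 (by simp) (by simp [hzero])
  exact ((h.continuousOn_flux hf) x hx).div
    ((h.continuousOn.continuousAt (Ioo_mem_nhds hx0 hx1)).continuousWithinAt) (h.pos ⟨hx0, hx1⟩).ne'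

theorem integral_mul_mul_eq_neg_integral_mul_flux (h : QuasiUnimodal D ω) {u v : ℝ → ℝ} {b : ℝ}
    (hb : b ∈ Icc (0 : ℝ) 1) (hf : ContinuousOn f (Icc 0 1)) (hzero : flux ω f b = 0)
    (hu : ContinuousOn u (Icc 0 b)) (hv : ContinuousOn v (Icc 0 b))
    (huv : ∀ x ∈ Ioo 0 b, HasDerivAt u (v x) x) :
    ∫ x in (0 : ℝ)..b, u x * (ω x * f x) = -∫ x in (0 : ℝ)..b, v x * flux ω f x := by
  have hparts := intervalIntegral.integral_mul_deriv_eq_deriv_mul_of_hasDerivAt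
    (u := u) (v := flux ω f) (u' := v) (v' := fun x => ω x * f x) (a := 0) (b := b)
    (by rwa [uIcc_of_le hb.1])
    (by rw [uIcc_of_le hb.1]; exact (h.continuousOn_flux hf).mono (Icc_subset_Icc_right hb.2))
    (by rwa [min_eq_left hb.1, max_eq_right hb.1])
    (by
      rw [min_eq_left hb.1, max_eq_right hb.1]
      exact fun x hx => h.hasDerivAt_flux hf ⟨hx.1, hx.2.trans_le hb.2⟩)
    (by rw [← uIcc_of_le hb.1] at hv; exact hv.intervalIntegrable)
    (h.intervalIntegrable_mul hf (by norm_num) hb)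
  rw [hparts, hzero]
  simp [flux]

theorem integral_mul_pos (h : QuasiUnimodal D ω) (hf : ContinuousOn f (Icc 0 1)) {a b : ℝ}
    (ha : 0 ≤ a) (hab : a < b) (hb : b ≤ 1) (hpos : ∀ x ∈ Ioo a b, 0 < f x) :
    0 < ∫ x in a..b, ω x * f x :=
  intervalIntegral.intervalIntegral_pos_of_pos_on
    (h.intervalIntegrable_mul hf ⟨ha, by linarith⟩ ⟨by linarith, hb⟩)
    (fun x hx => mul_pos (h.pos ⟨by linarith [hx.1], by linarith [hx.2]⟩) (hpos x hx)) hab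

theorem integral_mul_nonneg (h : QuasiUnimodal D ω) (hf : ContinuousOn f (Icc 0 1)) {a b : ℝ}
    (ha : 0 ≤ a) (hab : a ≤ b) (hb : b ≤ 1) (hnonneg : ∀ x ∈ Ioo a b, 0 ≤ f x) :
    0 ≤ ∫ x in a..b, ω x * f x := by
  have := intervalIntegral.integral_mono_on_of_le_Ioo hab (intervalIntegrable_const (c := (0 : ℝ)))
    (h.intervalIntegrable_mul hf ⟨ha, by linarith⟩ ⟨by linarith, hb⟩)
    fun x hx => mul_nonneg (h.pos ⟨by linarith [hx.1], by linarith [hx.2]⟩).le (hnonneg x hx)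
  simpa using this

end QuasiUnimodal

/-! ### The Neumann problem as a compact operator -/

section IntegralOperators

theorem isCompact_setOf_lipschitzWith {X Y : Type*} [PseudoMetricSpace X] [MetricSpace Y]
    (K : NNReal) {s : Set Y} (hs : IsCompact s) :
    IsCompact {f : C(X, Y) | LipschitzWith K f ∧ ∀ x, f x ∈ s} := by
  refine ArzelaAscoli.isCompact_of_equicontinuous _ ?_
    (LipschitzWith.uniformEquicontinuous _ K fun f => f.2.1).equicontinuous
  have himage : ContinuousMap.toFun '' {f : C(X, Y) | LipschitzWith K f ∧ ∀ x, f x ∈ s} =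
      {f : X → Y | LipschitzWith K f} ∩ univ.pi fun _ => s := by
    ext f
    refine ⟨?_, fun hf => ⟨⟨f, hf.1.continuous⟩, ⟨hf.1, fun x => hf.2 x (mem_univ x)⟩, rfl⟩⟩
    rintro ⟨g, hg, rfl⟩
    exact ⟨hg.1, fun x _ => hg.2 x⟩
  rw [himage]
  exact (isCompact_univ_pi fun _ => hs).inter_left (isClosed_setOfPred_lipschitzWith K)

theorem continuousOn_IccExtend (f : C(unitInterval, ℝ)) :
    ContinuousOn (IccExtend zero_le_one f) (Icc (0 : ℝ) 1) :=
  f.continuous.Icc_extend'.continuousOn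

theorem hasDerivAt_integral_IccExtend (f : C(unitInterval, ℝ)) (x : ℝ) :
    HasDerivAt (fun x => ∫ r in (0 : ℝ)..x, IccExtend zero_le_one f r)
      (IccExtend zero_le_one f x) x :=
  f.continuous.Icc_extend'.integral_hasStrictDerivAt 0 x |>.hasDerivAt

theorem lipschitzWith_integral_IccExtend (f : C(unitInterval, ℝ)) :
    LipschitzWith ‖f‖₊ fun x => ∫ r in (0 : ℝ)..x, IccExtend zero_le_one f r :=
  lipschitzWith_of_nnnorm_deriv_le (fun x => (hasDerivAt_integral_IccExtend f x).differentiableAt)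
    fun x => by
      rw [(hasDerivAt_integral_IccExtend f x).deriv]
      exact f.norm_coe_le_norm _

/-- The Volterra operator `f ↦ (x ↦ ∫₀ˣ f)` on `C([0, 1])`. -/
def volterra : C(unitInterval, ℝ) →L[ℝ] C(unitInterval, ℝ) :=
  LinearMap.mkContinuous
    { toFun f := ⟨fun x => ∫ r in (0 : ℝ)..x, IccExtend zero_le_one f r,
        (lipschitzWith_integral_IccExtend f).continuous.comp continuous_subtype_val⟩
      map_add' f g := by
        ext x
        exact intervalIntegral.integral_add (f.continuous.Icc_extend'.intervalIntegrable _ _)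
          (g.continuous.Icc_extend'.intervalIntegrable _ _)
      map_smul' c f := by
        ext x
        exact intervalIntegral.integral_const_mul c _ }
    1 fun f => by
      refine (ContinuousMap.norm_le _ (by positivity)).2 fun x => ?_
      have := (lipschitzWith_integral_IccExtend f).dist_le_mul x 0
      simp only [intervalIntegral.integral_same, dist_zero_right, coe_nnnorm, Real.norm_eq_abs,
        abs_of_nonneg x.2.1] at this
      rw [one_mul]
      exact this.trans (mul_le_of_le_one_right (norm_nonneg f) x.2.2)

theorem isCompactOperator_volterra : IsCompactOperator volterra := by
  refine (isCompactOperator_iff_image_closedBall_subset_compact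
    (volterra : C(unitInterval, ℝ) →ₗ[ℝ] C(unitInterval, ℝ)) one_pos).2
    ⟨_, isCompact_setOf_lipschitzWith 1 (isCompact_closedBall (0 : ℝ) ‖volterra‖), ?_⟩
  rintro _ ⟨f, hf, rfl⟩
  have hf : ‖f‖ ≤ 1 := mem_closedBall_zero_iff.1 hf
  refine ⟨fun x y => ((lipschitzWith_integral_IccExtend f).weaken hf) x y, fun x => ?_⟩
  exact mem_closedBall_zero_iff.2 <| ((volterra f).norm_coe_le_norm x).trans
    (volterra.unit_le_opNorm f hf)

end IntegralOperators

namespace QuasiUnimodal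

variable {D : ℝ} {ω : ℝ → ℝ}

theorem integral_pos (h : QuasiUnimodal D ω) : 0 < ∫ x in (0 : ℝ)..1, ω x := by
  simpa using h.integral_mul_pos (f := 1) continuousOn_const le_rfl zero_lt_one le_rfl (by simp)

theorem flux_add (h : QuasiUnimodal D ω) {f g : ℝ → ℝ} (hf : ContinuousOn f (Icc 0 1))
    (hg : ContinuousOn g (Icc 0 1)) {x : ℝ} (hx : x ∈ Icc (0 : ℝ) 1) :
    flux ω (fun r => f r + g r) x = flux ω f x + flux ω g x := by
  simp only [flux, mul_add]
  exact intervalIntegral.integral_add (h.intervalIntegrable_mul hf (by norm_num) hx)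
    (h.intervalIntegrable_mul hg (by norm_num) hx)

/-- The functional `f ↦ ∫₀¹ ω f` on `C([0, 1])`. -/
def weightedIntegral (h : QuasiUnimodal D ω) : C(unitInterval, ℝ) →L[ℝ] ℝ :=
  LinearMap.mkContinuous
    { toFun f := flux ω (IccExtend zero_le_one f) 1
      map_add' f g := h.flux_add (continuousOn_IccExtend f) (continuousOn_IccExtend g) (by norm_num)
      map_smul' c f := flux_const_mul ω c _ _ }
    (∫ x in (0 : ℝ)..1, ω x) fun f => by
      rw [← intervalIntegral.integral_mul_const]
      refine intervalIntegral.norm_integral_le_of_norm_le zero_le_one ?_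
        (h.intervalIntegrable_zero_one.mul_const _)
      filter_upwards [Measure.ae_ne volume (1 : ℝ)] with x hx1 hx
      have hω := h.pos ⟨hx.1, hx.2.lt_of_ne hx1⟩
      rw [norm_mul, Real.norm_of_nonneg hω.le]
      exact mul_le_mul_of_nonneg_left (f.norm_coe_le_norm _) hω.le

/-- The projection `f ↦ f - ∫₀¹ ω f / ∫₀¹ ω` onto the functions of weighted mean zero. -/
def center (h : QuasiUnimodal D ω) : C(unitInterval, ℝ) →L[ℝ] C(unitInterval, ℝ) :=
  ContinuousLinearMap.id ℝ _ - ((∫ x in (0 : ℝ)..1, ω x)⁻¹ • h.weightedIntegral).smulRight 1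

theorem center_apply (h : QuasiUnimodal D ω) (f : C(unitInterval, ℝ)) (x : unitInterval) :
    h.center f x = f x - (∫ x in (0 : ℝ)..1, ω x)⁻¹ * h.weightedIntegral f := by
  simp [center]

theorem weightedIntegral_center (h : QuasiUnimodal D ω) (f : C(unitInterval, ℝ)) :
    h.weightedIntegral (h.center f) = 0 := by
  have hone : h.weightedIntegral 1 = ∫ x in (0 : ℝ)..1, ω x := by
    simp [weightedIntegral, flux, IccExtend]
  simp [center, hone, mul_right_comm, h.integral_pos.ne']

/-- The operator `f ↦ (x ↦ (∫₀ˣ ω (f - mean f)) / ω x)` on `C([0, 1])`: up to sign, the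
derivative of the solution of `-(ω u')' = ω (f - mean f)`, `u'(0) = u'(1) = 0`. -/
def slope (h : QuasiUnimodal D ω) : C(unitInterval, ℝ) →L[ℝ] C(unitInterval, ℝ) :=
  LinearMap.mkContinuous
    { toFun f := ⟨fun x => flux ω (IccExtend zero_le_one (h.center f)) x / ω x,
        (h.continuousOn_flux_div (continuousOn_IccExtend _)
          (h.weightedIntegral_center f)).domRestrict⟩
      map_add' f g := by
        ext x
        change flux ω (IccExtend zero_le_one (h.center (f + g))) x / ω x = flux ω _ x / ω x +
          flux ω _ x / ω x
        rw [← add_div, ← h.flux_add (continuousOn_IccExtend _) (continuousOn_IccExtend _) x.2,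
          map_add]
        rfl
      map_smul' c f := by
        ext x
        change flux ω (IccExtend zero_le_one (h.center (c • f))) x / ω x = c * (flux ω _ x / ω x)
        rw [← mul_div_assoc, ← flux_const_mul, map_smul]
        rfl }
    (D * ‖h.center‖) fun f => by
      refine (ContinuousMap.norm_le _ ?_).2 fun x => ?_
      · exact mul_nonneg (mul_nonneg h.nonneg (norm_nonneg h.center)) (norm_nonneg f)
      · calc |flux ω (IccExtend zero_le_one (h.center f)) x / ω x|
            ≤ D * ‖h.center f‖ * min (x : ℝ) (1 - x) :=
              h.abs_flux_div_le (continuousOn_IccExtend _) (h.weightedIntegral_center f)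
                (fun r _ => (h.center f).norm_coe_le_norm _) x.2
          _ ≤ D * ‖h.center f‖ * 1 :=
              mul_le_mul_of_nonneg_left ((min_le_left _ _).trans x.2.2)
                (mul_nonneg h.nonneg (norm_nonneg _))
          _ ≤ D * (‖h.center‖ * ‖f‖) := by
              rw [mul_one]
              exact mul_le_mul_of_nonneg_left (h.center.le_opNorm f) h.nonneg
          _ = D * ‖h.center‖ * ‖f‖ := (mul_assoc _ _ _).symm

theorem slope_apply (h : QuasiUnimodal D ω) (f : C(unitInterval, ℝ)) (x : unitInterval) :
    h.slope f x = flux ω (IccExtend zero_le_one (h.center f)) x / ω x := rfl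

/-- The solution operator `f ↦ u` of `-(ω u')' = ω (f - mean f)`, `u'(0) = u'(1) = 0`, normalized
by `u(0) = 0`. -/
def neumannInverse (h : QuasiUnimodal D ω) : C(unitInterval, ℝ) →L[ℝ] C(unitInterval, ℝ) :=
  -volterra ∘L h.slope

theorem neumannInverse_apply (h : QuasiUnimodal D ω) (f : C(unitInterval, ℝ)) :
    h.neumannInverse f = -volterra (h.slope f) := rfl

theorem isCompactOperator_neumannInverse (h : QuasiUnimodal D ω) :
    IsCompactOperator h.neumannInverse :=
  (isCompactOperator_volterra.comp_clm h.slope).neg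

/-- The covariance `∫₀¹ ω (f - mean f) (g - mean g)` as a bilinear form on `C([0, 1])`. -/
def covariance (h : QuasiUnimodal D ω) :
    C(unitInterval, ℝ) →L[ℝ] C(unitInterval, ℝ) →L[ℝ] ℝ :=
  (ContinuousLinearMap.compL ℝ _ _ ℝ h.weightedIntegral).comp
    (ContinuousLinearMap.mul ℝ C(unitInterval, ℝ)) |>.bilinearComp h.center h.center

theorem covariance_apply (h : QuasiUnimodal D ω) (f g : C(unitInterval, ℝ)) :
    h.covariance f g = h.weightedIntegral (h.center f * h.center g) := rfl

theorem covariance_comm (h : QuasiUnimodal D ω) (f g : C(unitInterval, ℝ)) :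
    h.covariance f g = h.covariance g f := by
  rw [covariance_apply, covariance_apply, mul_comm]

theorem covariance_self_nonneg (h : QuasiUnimodal D ω) (f : C(unitInterval, ℝ)) :
    0 ≤ h.covariance f f :=
  h.integral_mul_nonneg (continuousOn_IccExtend (h.center f * h.center f)) le_rfl zero_le_one le_rfl
    fun _ _ => mul_self_nonneg (IccExtend zero_le_one (h.center f) _)

theorem hasDerivWithinAt_center_neumannInverse (h : QuasiUnimodal D ω) (f : C(unitInterval, ℝ))
    {x : ℝ} (hx : x ∈ Icc (0 : ℝ) 1) :
    HasDerivWithinAt (IccExtend zero_le_one (h.center (h.neumannInverse f)))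
      (-IccExtend zero_le_one (h.slope f) x) (Icc 0 1) x := by
  have heq : ∀ y ∈ Icc (0 : ℝ) 1, IccExtend zero_le_one (h.center (h.neumannInverse f)) y =
      -(∫ r in (0 : ℝ)..y, IccExtend zero_le_one (h.slope f) r) -
        (∫ x in (0 : ℝ)..1, ω x)⁻¹ * h.weightedIntegral (h.neumannInverse f) := by
    intro y hy
    rw [IccExtend_of_mem _ _ hy, center_apply]
    rfl
  exact (((hasDerivAt_integral_IccExtend (h.slope f) x).neg.sub_const _).hasDerivWithinAt).congr
    heq (heq x hx)

theorem covariance_neumannInverse (h : QuasiUnimodal D ω) (f g : C(unitInterval, ℝ)) :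
    h.covariance (h.neumannInverse f) g = h.weightedIntegral (h.slope f * h.slope g) := by
  have hparts := h.integral_mul_mul_eq_neg_integral_mul_flux
    (right_mem_Icc.2 zero_le_one) (continuousOn_IccExtend (h.center g))
    (h.weightedIntegral_center g) (continuousOn_IccExtend (h.center (h.neumannInverse f)))
    (continuousOn_IccExtend (h.slope f)).neg fun x hx =>
      (h.hasDerivWithinAt_center_neumannInverse f (Ioo_subset_Icc_self hx)).hasDerivAt
        (Icc_mem_nhds hx.1 hx.2)
  calc h.covariance (h.neumannInverse f) g
      = ∫ x in (0 : ℝ)..1, IccExtend zero_le_one (h.center (h.neumannInverse f)) x *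
          (ω x * IccExtend zero_le_one (h.center g) x) :=
        intervalIntegral.integral_congr fun x _ => mul_left_comm (ω x) _ _
    _ = ∫ x in (0 : ℝ)..1, IccExtend zero_le_one (h.slope f) x *
          flux ω (IccExtend zero_le_one (h.center g)) x := by
        rw [hparts, ← intervalIntegral.integral_neg]
        simp
    _ = h.weightedIntegral (h.slope f * h.slope g) := by
        refine intervalIntegral.integral_congr_Ioo_of_le zero_le_one fun x hx => ?_
        have hω := (h.pos hx).ne'
        have hslope : IccExtend zero_le_one (h.slope g) x =
            flux ω (IccExtend zero_le_one (h.center g)) x / ω x :=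
          IccExtend_of_mem _ _ (Ioo_subset_Icc_self hx)
        have hflux : flux ω (IccExtend zero_le_one (h.center g)) x =
            ω x * IccExtend zero_le_one (h.slope g) x := by
          rw [hslope, mul_div_cancel₀ _ hω]
        exact hflux ▸ mul_left_comm _ (ω x) _

theorem isNeumannEigenvalue_of_isCharacteristicValue (h : QuasiUnimodal D ω) {l : ℝ}
    (hl : IsCharacteristicValue h.neumannInverse l) : IsNeumannEigenvalue ω l := by
  obtain ⟨u, hu0, hu⟩ := hl
  have hcenter : IccExtend zero_le_one (h.center u) =
      fun x => l * IccExtend zero_le_one (h.center (h.neumannInverse u)) x := by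
    conv_lhs => rw [hu, map_smul]
    rfl
  refine ⟨IccExtend zero_le_one (h.center u), fun x => l * -IccExtend zero_le_one (h.slope u) x,
    fun x hx => ?_, ?_, ?_, ?_, ?_, fun x hx => ?_⟩
  · rw [hcenter]
    exact (h.hasDerivWithinAt_center_neumannInverse u hx).const_mul l
  · exact ((continuousOn_IccExtend (h.slope u)).neg).const_smul l
  · simp [slope_apply, flux]
  · have : flux ω (IccExtend zero_le_one (h.center u)) 1 = 0 := h.weightedIntegral_center u
    simp [slope_apply, this]
  · by_contra! hzero
    have hcenter0 : h.center u = 0 := by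
      ext x
      simpa using hzero x x.2
    have hslope0 : h.slope u = 0 := by
      ext x
      simp [slope_apply, hcenter0, flux, IccExtend]
    have hinverse0 : h.neumannInverse u = 0 := by
      rw [neumannInverse_apply, hslope0, map_zero, neg_zero]
    exact hu0 (by rw [hu, hinverse0, smul_zero])
  · have hderiv := (h.hasDerivAt_flux (continuousOn_IccExtend (h.center u)) hx).const_mul (-l)
    have heq : (fun t => ω t * (l * -IccExtend zero_le_one (h.slope u) t)) =ᶠ[𝓝 x]
        fun t => -l * flux ω (IccExtend zero_le_one (h.center u)) t := by
      filter_upwards [Ioo_mem_nhds hx.1 hx.2] with t ht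
      have hω := (h.pos ht).ne'
      rw [IccExtend_of_mem _ _ (Ioo_subset_Icc_self ht), slope_apply]
      field_simp
    exact (hderiv.congr_of_eventuallyEq heq).congr_deriv (by ring)

theorem center_eq_self (h : QuasiUnimodal D ω) {f : C(unitInterval, ℝ)}
    (hf : h.weightedIntegral f = 0) : h.center f = f := by
  ext x
  rw [center_apply, hf, mul_zero, sub_zero]

theorem weightedIntegral_slope_mul_self (h : QuasiUnimodal D ω) {f : C(unitInterval, ℝ)}
    (hf : h.weightedIntegral f = 0) : h.weightedIntegral (h.slope f * h.slope f) =
      ∫ x in (0 : ℝ)..1, flux ω (IccExtend zero_le_one f) x ^ 2 / ω x := by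
  refine intervalIntegral.integral_congr_Ioo_of_le zero_le_one fun x hx => ?_
  have hω := (h.pos hx).ne'
  simp only [IccExtend_of_mem _ _ (Ioo_subset_Icc_self hx), ContinuousMap.mul_apply, slope_apply,
    h.center_eq_self hf]
  field_simp

theorem exists_isNeumannEigenvalue_le (h : QuasiUnimodal D ω) {f : ℝ → ℝ}
    (hf : ContinuousOn f (Icc 0 1)) (hzero : flux ω f 1 = 0)
    (hpos : 0 < ∫ x in (0 : ℝ)..1, flux ω f x ^ 2 / ω x) :
    ∃ l, 0 < l ∧ l * (∫ x in (0 : ℝ)..1, flux ω f x ^ 2 / ω x) ≤ ∫ x in (0 : ℝ)..1, ω x * f x ^ 2 ∧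
      IsNeumannEigenvalue ω l := by
  set F : C(unitInterval, ℝ) := ⟨(Icc (0 : ℝ) 1).domRestrict f, hf.domRestrict⟩
  have hFf : EqOn (IccExtend zero_le_one F) f (Icc 0 1) := fun x hx => IccExtend_of_mem _ _ hx
  have hF : h.weightedIntegral F = 0 := (flux_congr hFf (by norm_num)).trans hzero
  have hvar : h.covariance F F = ∫ x in (0 : ℝ)..1, ω x * f x ^ 2 := by
    rw [covariance_apply, h.center_eq_self hF]
    refine intervalIntegral.integral_congr_Ioo_of_le zero_le_one fun x hx => ?_
    simp only [← hFf (Ioo_subset_Icc_self hx), sq]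
    rfl
  have henergy : h.covariance (h.neumannInverse F) F = ∫ x in (0 : ℝ)..1, flux ω f x ^ 2 / ω x := by
    rw [covariance_neumannInverse, h.weightedIntegral_slope_mul_self hF]
    refine intervalIntegral.integral_congr_Ioo_of_le zero_le_one fun x hx => ?_
    simp only [flux_congr hFf (Ioo_subset_Icc_self hx)]
  rw [← henergy] at hpos ⊢
  obtain ⟨l, hl0, hl, hchar⟩ := exists_isCharacteristicValue_le_rayleigh
    h.isCompactOperator_neumannInverse h.covariance_comm h.covariance_self_nonneg
    (fun f g => by
      rw [covariance_neumannInverse, covariance_comm, covariance_neumannInverse, mul_comm]) hpos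
  exact ⟨l, hl0, hvar ▸ (le_div_iff₀ hpos).1 hl,
    h.isNeumannEigenvalue_of_isCharacteristicValue hchar⟩

/-! ### The Rayleigh principle -/

variable {f v : ℝ → ℝ} {μ : ℝ}

theorem intervalIntegrable_flux_sq_div (h : QuasiUnimodal D ω) (hf : ContinuousOn f (Icc 0 1))
    (hzero : flux ω f 1 = 0) :
    IntervalIntegrable (fun x => flux ω f x ^ 2 / ω x) volume 0 1 := by
  refine (h.intervalIntegrable_mul ((h.continuousOn_flux_div hf hzero).pow 2)
    (left_mem_Icc.2 zero_le_one) (right_mem_Icc.2 zero_le_one)).congr_uIoo fun x hx => ?_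
  rw [uIoo_of_le zero_le_one] at hx
  have := (h.pos hx).ne'
  simp only [Pi.pow_apply]
  field_simp

theorem two_mul_integral_mul_sq_le (h : QuasiUnimodal D ω) (hf : ContinuousOn f (Icc 0 1))
    (hv : ContinuousOn v (Icc 0 1)) (hfv : ∀ x ∈ Ioo (0 : ℝ) 1, HasDerivAt f (v x) x)
    (hzero : flux ω f 1 = 0) (hμ : 0 < μ) :
    2 * ∫ x in (0 : ℝ)..1, ω x * f x ^ 2 ≤
      μ * (∫ x in (0 : ℝ)..1, flux ω f x ^ 2 / ω x) + (∫ x in (0 : ℝ)..1, ω x * v x ^ 2) / μ := by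
  have hparts : ∫ x in (0 : ℝ)..1, ω x * f x ^ 2 = -∫ x in (0 : ℝ)..1, v x * flux ω f x := by
    rw [← h.integral_mul_mul_eq_neg_integral_mul_flux (right_mem_Icc.2 zero_le_one) hf hzero hf hv
      hfv]
    exact intervalIntegral.integral_congr fun x _ => by ring
  have hcross : IntervalIntegrable (fun x => v x * flux ω f x) volume 0 1 :=
    (hv.mul (h.continuousOn_flux hf)).intervalIntegrable_of_Icc zero_le_one
  have hflux := (h.intervalIntegrable_flux_sq_div hf hzero).const_mul μ
  have henergy : IntervalIntegrable (fun x => ω x * v x ^ 2 / μ) volume 0 1 :=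
    (h.intervalIntegrable_mul (hv.pow 2) (left_mem_Icc.2 zero_le_one)
      (right_mem_Icc.2 zero_le_one)).div_const μ
  rw [hparts, ← intervalIntegral.integral_neg, ← intervalIntegral.integral_const_mul,
    ← intervalIntegral.integral_const_mul, ← intervalIntegral.integral_div,
    ← intervalIntegral.integral_add hflux henergy]
  refine intervalIntegral.integral_mono_on_of_le_Ioo zero_le_one (hcross.neg.const_mul 2)
    (hflux.add henergy) fun x hx => ?_
  have hω := h.pos hx
  have hsq : μ * (flux ω f x ^ 2 / ω x) + ω x * v x ^ 2 / μ - 2 * -(v x * flux ω f x) =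
      (μ * flux ω f x + ω x * v x) ^ 2 / (ω x * μ) := by
    field_simp
    ring
  have : 0 ≤ (μ * flux ω f x + ω x * v x) ^ 2 / (ω x * μ) := by positivity
  linarith

theorem exists_isNeumannEigenvalue_lt_of_flux_eq_zero (h : QuasiUnimodal D ω)
    (hf : ContinuousOn f (Icc 0 1)) (hv : ContinuousOn v (Icc 0 1))
    (hfv : ∀ x ∈ Ioo (0 : ℝ) 1, HasDerivAt f (v x) x) (hzero : flux ω f 1 = 0)
    (hlt : ∫ x in (0 : ℝ)..1, ω x * v x ^ 2 < μ * ∫ x in (0 : ℝ)..1, ω x * f x ^ 2) :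
    ∃ l, 0 < l ∧ l < μ ∧ IsNeumannEigenvalue ω l := by
  have hmass := h.integral_mul_nonneg (hf.pow 2) le_rfl zero_le_one le_rfl
    fun x _ => sq_nonneg (f x)
  have henergy := h.integral_mul_nonneg (hv.pow 2) le_rfl zero_le_one le_rfl
    fun x _ => sq_nonneg (v x)
  have hμ : 0 < μ := pos_of_mul_pos_left (henergy.trans_lt hlt) hmass
  have hduality := h.two_mul_integral_mul_sq_le hf hv hfv hzero hμ
  have hflux : ∫ x in (0 : ℝ)..1, ω x * f x ^ 2 <
      μ * ∫ x in (0 : ℝ)..1, flux ω f x ^ 2 / ω x := by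
    have := (div_lt_iff₀' hμ).2 hlt
    linarith
  have hflux0 : 0 < ∫ x in (0 : ℝ)..1, flux ω f x ^ 2 / ω x :=
    pos_of_mul_pos_right (hmass.trans_lt hflux) hμ.le
  obtain ⟨l, hl0, hl, heig⟩ := h.exists_isNeumannEigenvalue_le hf hzero hflux0
  exact ⟨l, hl0, lt_of_mul_lt_mul_right (hl.trans_lt hflux) hflux0.le, heig⟩

theorem exists_isNeumannEigenvalue_lt (h : QuasiUnimodal D ω)
    (hf : ContinuousOn f (Icc 0 1)) (hv : ContinuousOn v (Icc 0 1))
    (hfv : ∀ x ∈ Ioo (0 : ℝ) 1, HasDerivAt f (v x) x)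
    (hlt : ∫ x in (0 : ℝ)..1, ω x * v x ^ 2 < μ * ((∫ x in (0 : ℝ)..1, ω x * f x ^ 2) -
      (∫ x in (0 : ℝ)..1, ω x * f x) ^ 2 / ∫ x in (0 : ℝ)..1, ω x)) :
    ∃ l, 0 < l ∧ l < μ ∧ IsNeumannEigenvalue ω l := by
  set W := ∫ x in (0 : ℝ)..1, ω x
  set c := (∫ x in (0 : ℝ)..1, ω x * f x) / W
  have hW : 0 < W := h.integral_pos
  have hω := h.intervalIntegrable_zero_one
  have hωf := h.intervalIntegrable_mul hf (left_mem_Icc.2 zero_le_one) (right_mem_Icc.2 zero_le_one)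
  have hωf2 : IntervalIntegrable (fun x => ω x * f x ^ 2) volume 0 1 := h.intervalIntegrable_mul
    (hf.pow 2) (left_mem_Icc.2 zero_le_one) (right_mem_Icc.2 zero_le_one)
  have hmean : flux ω (fun x => f x - c) 1 = 0 := by
    simp only [flux, mul_sub]
    rw [intervalIntegral.integral_sub hωf (hω.mul_const c), intervalIntegral.integral_mul_const,
      mul_div_cancel₀ _ hW.ne', sub_self]
  have hvariance : ∫ x in (0 : ℝ)..1, ω x * (f x - c) ^ 2 = (∫ x in (0 : ℝ)..1, ω x * f x ^ 2) -
      (∫ x in (0 : ℝ)..1, ω x * f x) ^ 2 / W := by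
    have hexpand : ∀ x, ω x * (f x - c) ^ 2 = ω x * f x ^ 2 - 2 * c * (ω x * f x) + c ^ 2 * ω x :=
      fun x => by ring
    simp only [hexpand]
    rw [intervalIntegral.integral_add (hωf2.sub (hωf.const_mul _)) (hω.const_mul _),
      intervalIntegral.integral_sub hωf2 (hωf.const_mul _), intervalIntegral.integral_const_mul,
      intervalIntegral.integral_const_mul]
    simp only [c]
    field_simp
    ring
  exact h.exists_isNeumannEigenvalue_lt_of_flux_eq_zero (hf.sub continuousOn_const) hv
    (fun x hx => (hfv x hx).sub_const c) hmean (hvariance ▸ hlt)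

end QuasiUnimodal

/-! ### Neumann eigenfunctions -/

theorem hasDerivAt_comp_min_const {u u' : ℝ → ℝ} {t x : ℝ}
    (hu : HasDerivAt u (u' (min x t)) (min x t)) (ht : u' t = 0) :
    HasDerivAt (fun y => u (min y t)) (u' (min x t)) x := by
  have hconst : ∀ y ∈ Ici t, u (min y t) = u t := fun y hy => by rw [min_eq_right hy]
  rcases lt_trichotomy x t with hx | rfl | hx
  · rw [min_eq_left hx.le] at hu ⊢
    refine hu.congr_of_eventuallyEq ?_
    filter_upwards [Iio_mem_nhds hx] with y hy
    rw [min_eq_left (mem_Iio.1 hy).le]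
  · rw [min_self] at hu ⊢
    have hleft : HasDerivWithinAt (fun y => u (min y x)) (u' x) (Iic x) x :=
      hu.hasDerivWithinAt.congr (fun y hy => by rw [min_eq_left hy]) (by rw [min_self])
    have hright : HasDerivWithinAt (fun y => u (min y x)) (u' x) (Ici x) x :=
      ht ▸ (hasDerivWithinAt_const x _ (u x)).congr hconst (hconst x self_mem_Ici)
    simpa using hleft.union hright
  · rw [min_eq_right hx.le, ht]
    exact (hasDerivAt_const x (u t)).congr_of_eventuallyEq <|
      mem_of_superset (Ici_mem_nhds hx) hconst

namespace QuasiUnimodal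

variable {D : ℝ} {ω f : ℝ → ℝ} {t : ℝ}

theorem integral_mul_comp_min (h : QuasiUnimodal D ω) (hf : ContinuousOn f (Icc 0 1))
    (ht : t ∈ Icc (0 : ℝ) 1) : ∫ x in (0 : ℝ)..1, ω x * f (min x t) =
      (∫ x in (0 : ℝ)..t, ω x * f x) + f t * ∫ x in t..1, ω x := by
  have hmin : ContinuousOn (fun x => f (min x t)) (Icc 0 1) :=
    hf.comp (by fun_prop) fun x hx => ⟨le_min hx.1 ht.1, (min_le_left _ _).trans hx.2⟩
  rw [← intervalIntegral.integral_add_adjacent_intervals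
    (h.intervalIntegrable_mul hmin (left_mem_Icc.2 zero_le_one) ht)
    (h.intervalIntegrable_mul hmin ht (right_mem_Icc.2 zero_le_one)),
    ← intervalIntegral.integral_const_mul]
  congr 1
  · refine intervalIntegral.integral_congr_Ioo_of_le ht.1 fun x hx => ?_
    rw [min_eq_left hx.2.le]
  · refine intervalIntegral.integral_congr_Ioo_of_le ht.2 fun x hx => ?_
    rw [min_eq_right hx.1.le, mul_comm]

theorem exists_neg_of_flux_eq_zero (h : QuasiUnimodal D ω) (hf : ContinuousOn f (Icc 0 1))
    (hf0 : 0 < f 0) (ht : t ∈ Ioc (0 : ℝ) 1) (hflux : flux ω f t = 0) :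
    ∃ s ∈ Icc 0 t, f s < 0 := by
  by_contra! hnonneg
  have hpos : ∀ᶠ c in 𝓝[>] (0 : ℝ), ∀ x ∈ Ioo 0 c, 0 < f x := by
    have hlim : ∀ᶠ x in 𝓝[Icc 0 1] (0 : ℝ), 0 < f x :=
      (hf 0 (left_mem_Icc.2 zero_le_one)).eventually_const_lt hf0
    rw [nhdsWithin_Icc_eq_nhdsGE zero_lt_one] at hlim
    obtain ⟨b, hb, hb'⟩ := mem_nhdsGE_iff_exists_Ico_subset.1 hlim
    filter_upwards [Ioo_mem_nhdsGT hb] with c hc x hx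
    exact hb' ⟨hx.1.le, hx.2.trans hc.2⟩
  obtain ⟨c, hc, hc0, hct⟩ := (hpos.and (Ioo_mem_nhdsGT ht.1)).exists
  have hleft := h.integral_mul_pos hf le_rfl hc0 (hct.le.trans ht.2) hc
  have hright := h.integral_mul_nonneg hf hc0.le hct.le ht.2
    fun x hx => hnonneg x ⟨hc0.le.trans hx.1.le, hx.2.le⟩
  have hsplit := intervalIntegral.integral_add_adjacent_intervals
    (h.intervalIntegrable_mul hf (left_mem_Icc.2 zero_le_one) ⟨hc0.le, hct.le.trans ht.2⟩)
    (h.intervalIntegrable_mul hf ⟨hc0.le, hct.le.trans ht.2⟩ ⟨ht.1.le, ht.2⟩)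
  rw [flux] at hflux
  linarith

end QuasiUnimodal

namespace NeumannSol

variable {D μ : ℝ} {ω φ φd : ℝ → ℝ} {x t δ : ℝ}

theorem continuousOn (hφ : NeumannSol ω μ φ φd) : ContinuousOn φ (Icc 0 1) :=
  fun x hx => (hφ.1 x hx).continuousWithinAt

theorem hasDerivAt (hφ : NeumannSol ω μ φ φd) (hx : x ∈ Ioo (0 : ℝ) 1) : HasDerivAt φ (φd x) x :=
  (hφ.1 x (Ioo_subset_Icc_self hx)).hasDerivAt (Icc_mem_nhds hx.1 hx.2)

theorem tendsto_mul_deriv (hφ : NeumannSol ω μ φ φd) (h : QuasiUnimodal D ω)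
    (hx : x ∈ Icc (0 : ℝ) 1) (hx0 : φd x = 0) :
    Tendsto (fun y => ω y * φd y) (𝓝[Ioo 0 1] x) (𝓝 0) := by
  have hφd : Tendsto φd (𝓝[Ioo 0 1] x) (𝓝 0) :=
    hx0 ▸ ((hφ.2.1 x hx).mono Ioo_subset_Icc_self).tendsto
  refine bdd_le_mul_tendsto_zero' (D * ω (1 / 2)) ?_ hφd
  filter_upwards [self_mem_nhdsWithin] with y hy
  rw [abs_of_pos (h.pos hy)]
  exact h.le_mul_apply_half hy

theorem mul_deriv_add_mul_flux_eq (hφ : NeumannSol ω μ φ φd) (h : QuasiUnimodal D ω) {a : ℝ}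
    (ha : a ∈ Icc (0 : ℝ) 1) (ha0 : φd a = 0) (hx : x ∈ Ioo (0 : ℝ) 1) :
    ω x * φd x + μ * flux ω φ x = μ * flux ω φ a := by
  have hderiv : ∀ y ∈ Ioo (0 : ℝ) 1, HasDerivAt (fun y => ω y * φd y + μ * flux ω φ y) 0 y :=
    fun y hy => ((hφ.2.2.2.2.2 y hy).add ((h.hasDerivAt_flux hφ.continuousOn hy).const_mul μ))
      |>.congr_deriv (by ring)
  have hconst : (fun y => ω y * φd y + μ * flux ω φ y) =ᶠ[𝓝[Ioo 0 1] a]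
      fun _ => ω x * φd x + μ * flux ω φ x := by
    filter_upwards [self_mem_nhdsWithin] with y hy
    exact isOpen_Ioo.is_const_of_deriv_eq_zero isPreconnected_Ioo
      (fun z hz => (hderiv z hz).differentiableAt.differentiableWithinAt)
      (fun z hz => (hderiv z hz).deriv) hy hx
  have hlim : Tendsto (fun y => ω y * φd y + μ * flux ω φ y) (𝓝[Ioo 0 1] a)
      (𝓝 (0 + μ * flux ω φ a)) :=
    (hφ.tendsto_mul_deriv h ha ha0).add <| (((h.continuousOn_flux hφ.continuousOn) a ha).mono
      Ioo_subset_Icc_self).tendsto.const_mul μ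
  have : (𝓝[Ioo (0 : ℝ) 1] a).NeBot := by
    rw [← mem_closure_iff_nhdsWithin_neBot, closure_Ioo zero_ne_one]
    exact ha
  simpa using tendsto_nhds_unique (tendsto_const_nhds.congr' hconst.symm) hlim

theorem mul_deriv_eq_neg_mul_flux (hφ : NeumannSol ω μ φ φd) (h : QuasiUnimodal D ω)
    (hx : x ∈ Ioo (0 : ℝ) 1) : ω x * φd x = -(μ * flux ω φ x) := by
  have := hφ.mul_deriv_add_mul_flux_eq h (left_mem_Icc.2 zero_le_one) hφ.2.2.1 hx
  rw [show flux ω φ 0 = 0 from intervalIntegral.integral_same] at this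
  linarith

theorem flux_eq_zero (hφ : NeumannSol ω μ φ φd) (h : QuasiUnimodal D ω) (hμ : μ ≠ 0)
    (hx : x ∈ Ioc (0 : ℝ) 1) (hx0 : φd x = 0) : flux ω φ x = 0 := by
  have hhalf : (1 / 2 : ℝ) ∈ Ioo (0 : ℝ) 1 := by norm_num
  have hx' := hφ.mul_deriv_add_mul_flux_eq h ⟨hx.1.le, hx.2⟩ hx0 hhalf
  have := hφ.mul_deriv_eq_neg_mul_flux h hhalf
  exact (mul_eq_zero.1 (by linarith : μ * flux ω φ x = 0)).resolve_left hμ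

theorem integral_mul_deriv_sq (hφ : NeumannSol ω μ φ φd) (h : QuasiUnimodal D ω)
    (hx : x ∈ Icc (0 : ℝ) 1) (hflux : flux ω φ x = 0) :
    ∫ r in (0 : ℝ)..x, ω r * φd r ^ 2 = μ * ∫ r in (0 : ℝ)..x, ω r * φ r ^ 2 := by
  have hsub : Icc 0 x ⊆ Icc 0 1 := Icc_subset_Icc_right hx.2
  have hparts := h.integral_mul_mul_eq_neg_integral_mul_flux hx hφ.continuousOn hflux
    (hφ.continuousOn.mono hsub) (hφ.2.1.mono hsub)
    fun r hr => hφ.hasDerivAt ⟨hr.1, hr.2.trans_le hx.2⟩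
  calc ∫ r in (0 : ℝ)..x, ω r * φd r ^ 2
      = ∫ r in (0 : ℝ)..x, -μ * (φd r * flux ω φ r) := by
        refine intervalIntegral.integral_congr_Ioo_of_le hx.1 fun r hr => ?_
        have := hφ.mul_deriv_eq_neg_mul_flux h ⟨hr.1, hr.2.trans_le hx.2⟩
        linear_combination φd r * this
    _ = μ * ∫ r in (0 : ℝ)..x, φ r * (ω r * φ r) := by
        rw [intervalIntegral.integral_const_mul, hparts]
        ring
    _ = μ * ∫ r in (0 : ℝ)..x, ω r * φ r ^ 2 := by
        refine congrArg (μ * ·) (intervalIntegral.integral_congr fun r _ => ?_)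
        ring

/-- Freezing `φ` at its value at an interior critical point `t` produces a test function whose
Rayleigh quotient is below `μ`: the energy beyond `t` was not needed. -/
theorem exists_isNeumannEigenvalue_lt_of_critical (hφ : NeumannSol ω μ φ φd)
    (h : QuasiUnimodal D ω) (hμ : 0 < μ) (ht : t ∈ Ioo (0 : ℝ) 1) (htd : φd t = 0)
    (htφ : φ t ≠ 0) : ∃ l, 0 < l ∧ l < μ ∧ IsNeumannEigenvalue ω l := by
  have ht' : t ∈ Icc (0 : ℝ) 1 := Ioo_subset_Icc_self ht
  have hmin : MapsTo (fun x => min x t) (Icc 0 1) (Icc 0 1) :=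
    fun x hx => ⟨le_min hx.1 ht'.1, (min_le_left _ _).trans hx.2⟩
  have hflux := hφ.flux_eq_zero h hμ.ne' ⟨ht.1, ht.2.le⟩ htd
  have henergy : ∫ x in (0 : ℝ)..1, ω x * φd (min x t) ^ 2 =
      μ * ∫ x in (0 : ℝ)..t, ω x * φ x ^ 2 := by
    rw [← hφ.integral_mul_deriv_sq h ht' hflux]
    simpa [htd] using h.integral_mul_comp_min (hφ.2.1.pow 2) ht'
  have hmass : ∫ x in (0 : ℝ)..1, ω x * φ (min x t) ^ 2 =
      (∫ x in (0 : ℝ)..t, ω x * φ x ^ 2) + φ t ^ 2 * ∫ x in t..1, ω x :=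
    h.integral_mul_comp_min (hφ.continuousOn.pow 2) ht'
  have hmean : ∫ x in (0 : ℝ)..1, ω x * φ (min x t) = φ t * ∫ x in t..1, ω x := by
    rw [h.integral_mul_comp_min hφ.continuousOn ht', ← flux, hflux, zero_add]
  have hone : ContinuousOn (1 : ℝ → ℝ) (Icc 0 1) := continuousOn_const
  have hleft : 0 < ∫ x in (0 : ℝ)..t, ω x := by
    simpa using h.integral_mul_pos hone le_rfl ht.1 ht.2.le (by simp)
  have hright : 0 < ∫ x in t..1, ω x := by
    simpa using h.integral_mul_pos hone ht.1.le ht.2 le_rfl (by simp)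
  have htotal : ∫ x in (0 : ℝ)..1, ω x = (∫ x in (0 : ℝ)..t, ω x) + ∫ x in t..1, ω x := by
    simpa using h.integral_mul_comp_min hone ht'
  refine h.exists_isNeumannEigenvalue_lt (hφ.continuousOn.comp (by fun_prop) hmin)
    (hφ.2.1.comp (by fun_prop) hmin)
    (fun x hx => hasDerivAt_comp_min_const
      (hφ.hasDerivAt ⟨lt_min hx.1 ht.1, (min_le_left _ _).trans_lt hx.2⟩) htd) ?_
  simp only [henergy, hmass, hmean, htotal, Function.comp_apply]
  refine mul_lt_mul_of_pos_left ?_ hμ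
  rw [lt_sub_iff_add_lt, add_lt_add_iff_left, div_lt_iff₀ (by positivity)]
  have hgain : 0 < φ t ^ 2 * (∫ x in t..1, ω x) * ∫ x in (0 : ℝ)..t, ω x := by positivity
  linarith

theorem deriv_ne_zero (hφ : NeumannSol ω μ φ φd) (h : QuasiUnimodal D ω) (hμ : 0 < μ)
    (hmin : ∀ l, 0 < l → IsNeumannEigenvalue ω l → μ ≤ l) (hφ0 : 0 < φ 0)
    (ht : t ∈ Ioo (0 : ℝ) 1) : φd t ≠ 0 := by
  intro htd
  have hflux := hφ.flux_eq_zero h hμ.ne' ⟨ht.1, ht.2.le⟩ htd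
  obtain ⟨r, hr, hrneg⟩ :=
    h.exists_neg_of_flux_eq_zero hφ.continuousOn hφ0 ⟨ht.1, ht.2.le⟩ hflux
  obtain ⟨s, hs, hsmin⟩ := isCompact_Icc.exists_isMinOn (nonempty_Icc.2 ht.1.le)
    (hφ.continuousOn.mono (Icc_subset_Icc_right ht.2.le))
  have hsneg : φ s < 0 := (hsmin hr).trans_lt hrneg
  have hs0 : 0 < s := hs.1.lt_of_ne (by rintro rfl; exact hsneg.not_gt hφ0)
  have hsd : φd s = 0 := by
    rcases hs.2.eq_or_lt with rfl | hst
    · exact htd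
    · exact (hsmin.isLocalMin (Icc_mem_nhds hs0 hst)).hasDerivAt_eq_zero
        (hφ.hasDerivAt ⟨hs0, hst.trans ht.2⟩)
  obtain ⟨l, hl0, hl, heig⟩ := hφ.exists_isNeumannEigenvalue_lt_of_critical h hμ
    ⟨hs0, hs.2.trans_lt ht.2⟩ hsd hsneg.ne
  exact hl.not_ge (hmin l hl0 heig)

theorem exists_neg (hφ : NeumannSol ω μ φ φd) (h : QuasiUnimodal D ω) (hμ : μ ≠ 0)
    (hφ0 : 0 < φ 0) : ∃ s ∈ Icc (0 : ℝ) 1, φ s < 0 :=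
  h.exists_neg_of_flux_eq_zero hφ.continuousOn hφ0 (right_mem_Ioc.2 zero_lt_one)
    (hφ.flux_eq_zero h hμ (right_mem_Ioc.2 zero_lt_one) hφ.2.2.2.1)

theorem deriv_neg (hφ : NeumannSol ω μ φ φd) (h : QuasiUnimodal D ω) (hμ : 0 < μ)
    (hmin : ∀ l, 0 < l → IsNeumannEigenvalue ω l → μ ≤ l) (hφ0 : 0 < φ 0)
    (hx : x ∈ Ioo (0 : ℝ) 1) : φd x < 0 := by
  rcases hasDerivWithinAt_forall_lt_or_forall_gt_of_forall_ne (convex_Ioo (0 : ℝ) 1)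
    (fun y hy => (hφ.hasDerivAt hy).hasDerivWithinAt)
    (fun y hy => hφ.deriv_ne_zero h hμ hmin hφ0 hy) with hneg | hpos
  · exact hneg x hx
  have hmono : MonotoneOn φ (Icc 0 1) := by
    refine monotoneOn_of_hasDerivWithinAt_nonneg (f' := φd) (convex_Icc 0 1) hφ.continuousOn
      ?_ ?_ <;> rw [interior_Icc]
    · exact fun y hy => (hφ.hasDerivAt hy).hasDerivWithinAt
    · exact fun y hy => (hpos y hy).le
  obtain ⟨s, hs, hsneg⟩ := hφ.exists_neg h hμ.ne' hφ0
  exact absurd (hmono (left_mem_Icc.2 zero_le_one) hs hs.1) (hsneg.trans hφ0).not_ge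

theorem antitoneOn (hφ : NeumannSol ω μ φ φd) (h : QuasiUnimodal D ω) (hμ : 0 < μ)
    (hmin : ∀ l, 0 < l → IsNeumannEigenvalue ω l → μ ≤ l) (hφ0 : 0 < φ 0) :
    AntitoneOn φ (Icc 0 1) := by
  refine antitoneOn_of_hasDerivWithinAt_nonpos (f' := φd) (convex_Icc 0 1) hφ.continuousOn ?_ ?_ <;>
    rw [interior_Icc]
  · exact fun y hy => (hφ.hasDerivAt hy).hasDerivWithinAt
  · exact fun y hy => (hφ.deriv_neg h hμ hmin hφ0 hy).le

theorem right_neg (hφ : NeumannSol ω μ φ φd) (h : QuasiUnimodal D ω) (hμ : μ ≠ 0)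
    (hanti : AntitoneOn φ (Icc 0 1)) (hφ0 : 0 < φ 0) : φ 1 < 0 := by
  obtain ⟨s, hs, hsneg⟩ := hφ.exists_neg h hμ hφ0
  exact (hanti hs (right_mem_Icc.2 zero_le_one) hs.2).trans_lt hsneg

theorem comp_one_sub (hφ : NeumannSol ω μ φ φd) :
    NeumannSol (fun x => ω (1 - x)) μ (fun x => -φ (1 - x)) fun x => φd (1 - x) := by
  have hIcc : MapsTo (fun x : ℝ => 1 - x) (Icc 0 1) (Icc 0 1) :=
    fun x hx => ⟨by linarith [hx.2], by linarith [hx.1]⟩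
  obtain ⟨hderiv, hcont, h0, h1, ⟨z, hz, hφz⟩, hode⟩ := hφ
  refine ⟨fun x hx => ?_, hcont.comp (by fun_prop) hIcc, by simpa using h1, by simpa using h0,
    ⟨1 - z, hIcc hz, by simpa using hφz⟩, fun x hx => ?_⟩
  · have := ((hderiv _ (hIcc hx)).scomp x
      ((hasDerivAt_id x).const_sub 1).hasDerivWithinAt hIcc).neg
    exact this.congr_deriv (by simp)
  · have := (hode (1 - x) ⟨by linarith [hx.2], by linarith [hx.1]⟩).scomp x
      ((hasDerivAt_id x).const_sub 1)
    exact this.congr_deriv (by simp)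

theorem neg_le_deriv (hφ : NeumannSol ω μ φ φd) (h : QuasiUnimodal D ω) (hμ : 0 ≤ μ)
    (hanti : AntitoneOn φ (Icc 0 1)) (hφ0 : 0 ≤ φ 0) (hx0 : 0 < x) (hx : x ≤ 1 / 2) :
    -(μ * D * φ 0) ≤ φd x := by
  have hω : 0 < ω x := h.pos ⟨hx0, by linarith⟩
  have hflux : flux ω φ x ≤ D * φ 0 * ω x :=
    calc flux ω φ x ≤ D * φ 0 * x * ω x :=
          h.flux_le_of_le hφ.continuousOn hx0 hx hφ0 fun r hr =>
            hanti (left_mem_Icc.2 zero_le_one) ⟨hr.1, by linarith [hr.2]⟩ hr.1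
      _ ≤ D * φ 0 * ω x :=
          mul_le_mul_of_nonneg_right (mul_le_of_le_one_right (mul_nonneg h.nonneg hφ0)
            (by linarith)) hω.le
  refine le_of_mul_le_mul_left ?_ hω
  rw [hφ.mul_deriv_eq_neg_mul_flux h ⟨hx0, by linarith⟩]
  linarith [mul_le_mul_of_nonneg_left hflux hμ]

theorem half_left_le (hφ : NeumannSol ω μ φ φd) (h : QuasiUnimodal D ω) (hμ : 0 ≤ μ)
    (hanti : AntitoneOn φ (Icc 0 1)) (hφ0 : 0 ≤ φ 0) (hδ : δ ≤ 1 / 2)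
    (hμδ : 2 * (μ * D * δ) ≤ 1) (hx : x ∈ Icc 0 δ) : φ 0 / 2 ≤ φ x := by
  have hsub : Icc (0 : ℝ) (1 / 2) ⊆ Icc 0 1 := Icc_subset_Icc_right (by norm_num)
  have hmem : ∀ {y : ℝ}, y ∈ interior (Icc (0 : ℝ) (1 / 2)) → y ∈ Ioo (0 : ℝ) 1 := by
    intro y hy
    rw [interior_Icc] at hy
    exact ⟨hy.1, by linarith [hy.2]⟩
  have hslope : -(μ * D * φ 0) * (x - 0) ≤ φ x - φ 0 := by
    refine (convex_Icc (0 : ℝ) (1 / 2)).mul_sub_le_image_sub_of_le_deriv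
      (hφ.continuousOn.mono hsub)
      (fun y hy => (hφ.hasDerivAt (hmem hy)).differentiableAt.differentiableWithinAt)
      (fun y hy => ?_) 0 (by norm_num) x ⟨hx.1, hx.2.trans hδ⟩ hx.1
    rw [(hφ.hasDerivAt (hmem hy)).deriv]
    exact hφ.neg_le_deriv h hμ hanti hφ0 (hmem hy).1 (interior_subset hy).2
  have hμx : 2 * (μ * D * x) ≤ 1 := by
    linarith [mul_le_mul_of_nonneg_left hx.2 (mul_nonneg hμ h.nonneg)]
  linarith [mul_le_mul_of_nonneg_right hμx hφ0]

theorem le_half_right (hφ : NeumannSol ω μ φ φd) (h : QuasiUnimodal D ω) (hμ : 0 ≤ μ)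
    (hanti : AntitoneOn φ (Icc 0 1)) (hφ1 : φ 1 ≤ 0) (hδ : δ ≤ 1 / 2)
    (hμδ : 2 * (μ * D * δ) ≤ 1) (hx : x ∈ Icc (1 - δ) 1) : φ x ≤ φ 1 / 2 := by
  have hanti' : AntitoneOn (fun y => -φ (1 - y)) (Icc 0 1) := fun y hy z hz hyz =>
    neg_le_neg (hanti ⟨by linarith [hz.2], by linarith [hz.1]⟩
      ⟨by linarith [hy.2], by linarith [hy.1]⟩ (by linarith))
  have := hφ.comp_one_sub.half_left_le h.comp_one_sub hμ hanti' (by simpa using hφ1) hδ hμδ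
    (x := 1 - x) ⟨by linarith [hx.2], by linarith [hx.1]⟩
  simp only [sub_zero, sub_sub_cancel] at this
  linarith

end NeumannSol

/-! ### Volumes of cross-sections -/

/-- The volumes of the sections of a convex body of dimension `m + 1` satisfy this inequality: the
body contains the cone over its section at `x` with apex in its section at `z`. -/
def ConeInequality (m : ℕ) (ω : ℝ → ℝ) : Prop :=
  ∀ ⦃x y z : ℝ⦄, z ∈ Ioo (0 : ℝ) 1 → y ∈ uIcc x z → |z - y| ^ m * ω x ≤ |z - x| ^ m * ω y

namespace ConeInequality

variable {m : ℕ} {ω : ℝ → ℝ}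

theorem div_le (h : ConeInequality m ω) {x y z : ℝ} (hz : z ∈ Ioo (0 : ℝ) 1) (hzx : z ≠ x)
    (hy : y ∈ uIcc x z) : |z - y| ^ m * ω x / |z - x| ^ m ≤ ω y :=
  (div_le_iff₀' (pow_pos (abs_pos.2 (sub_ne_zero.2 hzx)) m)).2 (h hz hy)

theorem le_div (h : ConeInequality m ω) {x y z : ℝ} (hz : z ∈ Ioo (0 : ℝ) 1) (hzx : z ≠ x)
    (hx : x ∈ uIcc y z) : ω y ≤ |z - y| ^ m * ω x / |z - x| ^ m :=
  (le_div_iff₀' (pow_pos (abs_pos.2 (sub_ne_zero.2 hzx)) m)).2 (h hz hx)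

/-- Near `x`, the function is squeezed between the two cones through `(x, ω x)` with apexes on
either side of `x`. -/
theorem continuousAt (h : ConeInequality m ω) {x : ℝ} (hx : x ∈ Ioo (0 : ℝ) 1) :
    ContinuousAt ω x := by
  obtain ⟨a, ha0, hax⟩ := exists_between hx.1
  obtain ⟨b, hxb, hb1⟩ := exists_between hx.2
  have ha : a ∈ Ioo (0 : ℝ) 1 := ⟨ha0, hax.trans hx.2⟩
  have hb : b ∈ Ioo (0 : ℝ) 1 := ⟨hx.1.trans hxb, hb1⟩
  let cone : ℝ → ℝ → ℝ := fun z y => |z - y| ^ m * ω x / |z - x| ^ m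
  have hcone : ∀ z, z ≠ x → Tendsto (cone z) (𝓝 x) (𝓝 (ω x)) := fun z hz => by
    have hzx : |z - x| ^ m ≠ 0 := pow_ne_zero m (abs_ne_zero.2 (sub_ne_zero.2 hz))
    have : Continuous (cone z) := by fun_prop
    simpa [cone, hzx] using this.tendsto x
  have hlower := (hcone a hax.ne).min (hcone b hxb.ne')
  have hupper := (hcone a hax.ne).max (hcone b hxb.ne')
  rw [min_self] at hlower
  rw [max_self] at hupper
  have hbounds : ∀ᶠ y in 𝓝 x,
      min (cone a y) (cone b y) ≤ ω y ∧ ω y ≤ max (cone a y) (cone b y) := by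
    filter_upwards [Ioo_mem_nhds hax hxb] with y hy
    rcases le_total x y with hxy | hxy
    · exact ⟨min_le_of_right_le (h.div_le hb hxb.ne' (mem_uIcc.2 (.inl ⟨hxy, hy.2.le⟩))),
        le_max_of_le_left (h.le_div ha hax.ne (mem_uIcc.2 (.inr ⟨hax.le, hxy⟩)))⟩
    · exact ⟨min_le_of_left_le (h.div_le ha hax.ne (mem_uIcc.2 (.inr ⟨hy.1.le, hxy⟩))),
        le_max_of_le_right (h.le_div hb hxb.ne' (mem_uIcc.2 (.inl ⟨hxy, hxb.le⟩)))⟩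
  exact tendsto_of_tendsto_of_tendsto_of_le_of_le' hlower hupper
    (hbounds.mono fun _ => And.left) (hbounds.mono fun _ => And.right)

theorem le_three_pow_mul (h : ConeInequality m ω) {x y z : ℝ} (hz : z ∈ Ioo (0 : ℝ) 1)
    (hy : y ∈ uIcc x z) (hy0 : 0 ≤ ω y) (hx0 : 0 ≤ ω x) (hzy : 1 / 4 ≤ |z - y|)
    (hzx : |z - x| ≤ 3 / 4) : ω x ≤ 3 ^ m * ω y := by
  have hscaled : (1 / 4) ^ m * ω x ≤ (1 / 4) ^ m * (3 ^ m * ω y) :=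
    calc (1 / 4) ^ m * ω x ≤ |z - y| ^ m * ω x := by gcongr
      _ ≤ |z - x| ^ m * ω y := h hz hy
      _ ≤ (3 / 4) ^ m * ω y := by gcongr
      _ = (1 / 4) ^ m * (3 ^ m * ω y) := by rw [← mul_assoc, ← mul_pow]; norm_num
  exact le_of_mul_le_mul_left hscaled (by positivity)

theorem quasiUnimodal (h : ConeInequality m ω) (hpos : ∀ x ∈ Ioo (0 : ℝ) 1, 0 < ω x) :
    QuasiUnimodal (3 ^ m) ω where
  pos := hpos
  continuousOn x hx := (h.continuousAt hx).continuousWithinAt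
  le_of_le_half r s hr hrs hs := by
    refine h.le_three_pow_mul (z := 3 / 4) (by norm_num) (mem_uIcc.2 (.inl ⟨hrs, by linarith⟩))
      (hpos s ⟨by linarith, by linarith⟩).le (hpos r ⟨hr, by linarith⟩).le ?_ ?_ <;>
      rw [abs_of_nonneg (by linarith)] <;> linarith
  le_of_half_le r s hs hsr hr := by
    refine h.le_three_pow_mul (z := 1 / 4) (by norm_num) (mem_uIcc.2 (.inr ⟨by linarith, hsr⟩))
      (hpos s ⟨by linarith, by linarith⟩).le (hpos r ⟨by linarith, hr⟩).le ?_ ?_ <;>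
      rw [abs_of_nonpos (by linarith)] <;> linarith

end ConeInequality

section CrossSections

variable {m : ℕ} {Ω : Set (EuclideanSpace ℝ (Fin (m + 1)))}

theorem smul_mkPt_add_smul_mkPt (a b x z : ℝ) (y w : EuclideanSpace ℝ (Fin m)) :
    a • mkPt m x y + b • mkPt m z w = mkPt m (a * x + b * z) (a • y + b • w) := by
  ext i
  refine Fin.cases ?_ (fun j => ?_) i <;> simp [mkPt]

theorem continuous_mkPt (x : ℝ) : Continuous (mkPt m x) := by
  refine (EuclideanSpace.equiv (Fin (m + 1)) ℝ).symm.continuous.comp (continuous_pi fun i => ?_)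
  refine Fin.cases continuous_const (fun j => ?_) i
  simp only [Fin.cons_succ, PiLp.coe_continuousLinearEquiv]
  fun_prop

theorem norm_le_norm_mkPt (x : ℝ) (y : EuclideanSpace ℝ (Fin m)) : ‖y‖ ≤ ‖mkPt m x y‖ := by
  rw [EuclideanSpace.norm_eq, EuclideanSpace.norm_eq, Fin.sum_univ_succ]
  exact Real.sqrt_le_sqrt (le_add_of_nonneg_left (sq_nonneg _))

theorem volume_cross_ne_top (hb : Bornology.IsBounded Ω) (s : ℝ) : volume (cross Ω s) ≠ ⊤ := by
  obtain ⟨R, hR⟩ := hb.exists_norm_le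
  have : Bornology.IsBounded (cross Ω s) :=
    isBounded_iff_forall_norm_le.2 ⟨R, fun y hy => (norm_le_norm_mkPt s y).trans (hR _ hy)⟩
  exact this.measure_lt_top.ne

theorem ωvol_pos (ho : IsOpen Ω) (hb : Bornology.IsBounded Ω) {s : ℝ}
    (hs : (cross Ω s).Nonempty) : 0 < ωvol Ω s :=
  ENNReal.toReal_pos ((ho.preimage (continuous_mkPt s)).measure_pos volume hs).ne'
    (volume_cross_ne_top hb s)

theorem pow_mul_ωvol_le (hc : Convex ℝ Ω) (hb : Bornology.IsBounded Ω) {a b x z : ℝ} (ha : 0 ≤ a)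
    (hb0 : 0 ≤ b) (hab : a + b = 1) (hz : (cross Ω z).Nonempty) :
    a ^ m * ωvol Ω x ≤ ωvol Ω (a * x + b * z) := by
  obtain ⟨w, hw⟩ := hz
  have hcone : AffineMap.homothety w a '' cross Ω x ⊆ cross Ω (a * x + b * z) := by
    rintro _ ⟨y, hy, rfl⟩
    have hcomb : AffineMap.homothety w a y = a • y + b • w := by
      rw [AffineMap.homothety_eq_lineMap, AffineMap.lineMap_apply_module, ← hab,
        add_sub_cancel_left, add_comm]
    rw [hcomb, cross, mem_ofPred_eq, ← smul_mkPt_add_smul_mkPt]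
    exact hc hy hw ha hb0 hab
  have hvol := ENNReal.toReal_mono (volume_cross_ne_top hb _) (measure_mono hcone (μ := volume))
  rwa [Measure.addHaar_image_homothety, finrank_euclideanSpace_fin, ENNReal.toReal_mul,
    ENNReal.toReal_ofReal (abs_nonneg _), abs_of_nonneg (pow_nonneg ha m)] at hvol

theorem coneInequality_ωvol (hc : Convex ℝ Ω) (hb : Bornology.IsBounded Ω)
    (hne : ∀ s ∈ Ioo (0 : ℝ) 1, (cross Ω s).Nonempty) : ConeInequality m (ωvol Ω) := by
  intro x y z hz hy
  rw [← segment_eq_uIcc] at hy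
  obtain ⟨a, b, ha, hb0, hab, rfl⟩ := hy
  have hratio : |z - (a • x + b • z)| = |z - x| * a := by
    rw [← abs_of_nonneg ha, ← abs_mul, abs_of_nonneg ha, smul_eq_mul, smul_eq_mul]
    exact congrArg _ (by linear_combination -z * hab)
  rw [hratio, mul_pow, mul_assoc]
  exact mul_le_mul_of_nonneg_left (pow_mul_ωvol_le hc hb ha hb0 hab (hne z hz)) (by positivity)

end CrossSections

theorem ode_eigenfunction_monotone_and_ends_general (D C : ℝ) :
    ∃ δ₁ > (0 : ℝ), δ₁ < 1 / 2 ∧ ∀ (ω φ φd : ℝ → ℝ) (μ : ℝ), QuasiUnimodal D ω →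
      NeumannSol ω μ φ φd → 0 < μ → (∀ l, 0 < l → IsNeumannEigenvalue ω l → μ ≤ l) →
      0 < φ 0 → μ ≤ C →
      AntitoneOn φ (Icc 0 1) ∧
      (∀ x ∈ Icc (0 : ℝ) δ₁, φ 0 / 2 ≤ φ x) ∧
      (∀ x ∈ Icc (1 - δ₁) (1 : ℝ), φ x ≤ φ 1 / 2) ∧
      ∀ s₁ ∈ Icc (0 : ℝ) 1, φ s₁ = 0 → δ₁ < s₁ ∧ s₁ < 1 - δ₁ := by
  refine ⟨1 / (4 + 2 * |C * D|), by positivity, ?_, fun ω φ φd μ h hφ hμ hmin hφ0 hμC => ?_⟩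
  · rw [div_lt_div_iff₀ (by positivity) two_pos]
    linarith [abs_nonneg (C * D)]
  set δ := 1 / (4 + 2 * |C * D|) with hδ_def
  have hδ : δ ≤ 1 / 2 :=
    one_div_le_one_div_of_le two_pos (by linarith [abs_nonneg (C * D)])
  have hμδ : 2 * (μ * D * δ) ≤ 1 := by
    have hμD : μ * D ≤ |C * D| := (mul_le_mul_of_nonneg_right hμC h.nonneg).trans (le_abs_self _)
    rw [hδ_def, mul_one_div, ← mul_div_assoc, div_le_one (by positivity)]
    linarith
  have hanti := hφ.antitoneOn h hμ hmin hφ0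
  have hφ1 := hφ.right_neg h hμ.ne' hanti hφ0
  have hleft : ∀ x ∈ Icc 0 δ, φ 0 / 2 ≤ φ x :=
    fun x hx => hφ.half_left_le h hμ.le hanti hφ0.le hδ hμδ hx
  have hright : ∀ x ∈ Icc (1 - δ) 1, φ x ≤ φ 1 / 2 :=
    fun x hx => hφ.le_half_right h hμ.le hanti hφ1.le hδ hμδ hx
  refine ⟨hanti, hleft, hright, fun s hs hs0 => ⟨?_, ?_⟩⟩
  · by_contra! hsδ
    linarith [hleft s ⟨hs.1, hsδ⟩]
  · by_contra! hsδ
    linarith [hright s ⟨hsδ, hs.2⟩]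

/-- The first ODE eigenfunction `φ` is nonincreasing on `[0,1]`, stays
`≥ φ(0)/2` on `[0, δ₁]` and `≤ φ(1)/2` on `[1-δ₁, 1]` for a constant `δ₁`; in particular
any zero `s₁` of `φ` satisfies `δ₁ < s₁ < 1 - δ₁`. -/
theorem ode_eigenfunction_monotone_and_ends
    (m : ℕ) (hm : 1 ≤ m) (cμ Cμ : ℝ) (hcμ : 0 < cμ) (hCμ : cμ ≤ Cμ) :
    ∃ δ₁ > (0:ℝ), δ₁ < 1/2 ∧
    ∀ (Ω : Set (EuclideanSpace ℝ (Fin (m+1)))) (φ φd : ℝ → ℝ) (μ : ℝ),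
      IsOpen Ω → Convex ℝ Ω → Bornology.IsBounded Ω →
      -- Ω ⊆ (0,1) × ℝ^{n-1}
      (∀ x y, mkPt m x y ∈ Ω → x ∈ Ioo (0:ℝ) 1) →
      -- nonempty cross-sections
      (∀ s ∈ Ioo (0:ℝ) 1, (cross Ω s).Nonempty) →
      -- φ is a first Neumann eigenfunction of -(ωφ')' = μωφ, with φ(0) > 0
      NeumannSol (ωvol Ω) μ φ φd →
      0 < μ →
      (∀ μ', 0 < μ' → IsNeumannEigenvalue (ωvol Ω) μ' → μ ≤ μ') →
      (∫ x in (0:ℝ)..1, ωvol Ω x * φ x) = 0 →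
      0 < φ 0 →
      -- uniform bounds on μ, assumed as hypotheses
      cμ ≤ μ → μ ≤ Cμ →
      AntitoneOn φ (Icc 0 1) ∧
      (∀ x ∈ Icc (0:ℝ) δ₁, φ 0 / 2 ≤ φ x) ∧
      (∀ x ∈ Icc (1 - δ₁) (1:ℝ), φ x ≤ φ 1 / 2) ∧
      (∀ s₁ ∈ Icc (0:ℝ) 1, φ s₁ = 0 → δ₁ < s₁ ∧ s₁ < 1 - δ₁) := by
  obtain ⟨δ₁, hδ0, hδ, hends⟩ := ode_eigenfunction_monotone_and_ends_general (3 ^ m) Cμ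
  exact ⟨δ₁, hδ0, hδ, fun Ω φ φd μ ho hc hb _ hne hφ hμ hmin _ hφ0 _ hμC => hends _ φ φd μ
    ((coneInequality_ωvol hc hb hne).quasiUnimodal fun s hs => ωvol_pos ho hb (hne s hs))
    hφ hμ hmin hφ0 hμC⟩
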